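/- The metric δ_P is complete on D^k(H), and the δ_P-topology coincides with the operator-norm topology on D^k(H): (a) every δ_P-Cauchy sequence in D^k(H) converges in δ_P to an element of D^k(H); (b) for a sequence (A^{(m)}) in D^k(H) and A ∈ D^k(H), δ_P(A^{(m)}, A) → 0 if and only if max_{1≤i≤k} ‖A_i^{(m)} − A_i‖ → 0. -/

import Mathlib

open ContinuousLinearMap

noncomputable section

/-- `ℓ²(ℕ^k; H)`. -/
abbrev L2 (k : ℕ) (H : Type*) [NormedAddCommGroup H] : Type _ :=
  lp (fun _ : Fin k → ℕ => H) 2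

variable {k : ℕ} {H : Type*} [NormedAddCommGroup H] [InnerProductSpace ℂ H] [CompleteSpace H]

/-- The Loewner (operator) order: `S ≤ T` iff `T - S` is a positive operator. -/
def opLE {E : Type*} [NormedAddCommGroup E] [InnerProductSpace ℂ E] [CompleteSpace E]
    (S T : E →L[ℂ] E) : Prop := (T - S).IsPositive

/-- The defect operator `Δ_X(I) = (id - Φ_{X_1}) ∘ ⋯ ∘ (id - Φ_{X_k})(I)`,
where `Φ_{X_i}(Y) = X_i Y X_i*`. -/
def defect (X : Fin k → (H →L[ℂ] H)) : H →L[ℂ] H :=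
  ((List.ofFn fun i => fun Y : H →L[ℂ] H => Y - X i * Y * adjoint (X i)).foldr (· ∘ ·) id) 1

/-- Membership in the regular polydisk `D^k(H)`: pairwise commuting operators of norm `< 1`
with positive invertible defect operator. -/
def memPolydisk (X : Fin k → (H →L[ℂ] H)) : Prop :=
  (∀ i j, Commute (X i) (X j)) ∧ (∀ i, ‖X i‖ < 1) ∧
    (defect X).IsPositive ∧ IsUnit (defect X)

/-- Membership in the closed regular polydisk `D^k(H)⁻`: pairwise commuting contractions `X`
with `rX ∈ D^k(H)` for all `r ∈ (0,1)`. -/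
def memClosedPolydisk (X : Fin k → (H →L[ℂ] H)) : Prop :=
  (∀ i j, Commute (X i) (X j)) ∧ (∀ i, ‖X i‖ ≤ 1) ∧
    ∀ r ∈ Set.Ioo (0 : ℝ) 1, memPolydisk (fun i => ((r : ℂ) • X i))

/-- `P` is the pluriharmonic Poisson kernel `𝒫(R, rX)` on `ℓ²(ℕ^k; H)`: it is characterized by
`⟨𝒫(R,rX)(δ_β h), δ_α ℓ⟩ = r^{Σ|α_i - β_i|} ⟨(∏ X_i^{(β_i-α_i)⁺})(∏ (X_i*)^{(α_i-β_i)⁺}) h, ℓ⟩`. -/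
def IsPoissonKernel (X : Fin k → (H →L[ℂ] H)) (r : ℝ)
    (P : L2 k H →L[ℂ] L2 k H) : Prop :=
  ∀ (α β : Fin k → ℕ) (h ℓ : H),
    inner (𝕜 := ℂ) (P (lp.single 2 β h)) (lp.single 2 α ℓ) =
      ((r ^ (∑ i, ((α i - β i) + (β i - α i))) : ℝ) : ℂ) *
        inner (𝕜 := ℂ)
          (((List.ofFn fun i => X i ^ (β i - α i)).prod *
            (List.ofFn fun i => (adjoint (X i)) ^ (α i - β i)).prod) h) ℓ

/-- The two-sided Harnack-type domination `c⁻² 𝒫(R,rB) ≤ 𝒫(R,rA) ≤ c² 𝒫(R,rB)` for all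
`r ∈ [0,1)`, expressed in terms of the Poisson kernel families. -/
def PoissonSandwich (PA PB : ℝ → (L2 k H →L[ℂ] L2 k H)) (c : ℝ) : Prop :=
  ∀ r ∈ Set.Ico (0 : ℝ) 1,
    opLE (((c : ℂ) ^ 2)⁻¹ • PB r) (PA r) ∧ opLE (PA r) (((c : ℂ) ^ 2) • PB r)

/-- Poisson equivalence of two points, expressed via their Poisson kernel families. -/
def PoissonEquiv (PA PB : ℝ → (L2 k H →L[ℂ] L2 k H)) : Prop :=
  ∃ c : ℝ, 1 ≤ c ∧ PoissonSandwich PA PB c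

/-- The Poisson distance `δ_P`, expressed via the Poisson kernel families. -/
def deltaP (PA PB : ℝ → (L2 k H →L[ℂ] L2 k H)) : ℝ :=
  Real.log (sInf {c : ℝ | 1 ≤ c ∧ PoissonSandwich PA PB c})

/-!
The operator `𝒫(R, rX)` has the matrix `r ^ |α - β| X^{(β - α)⁺} (X*)^{(α - β)⁺}`. Let `F_X` be the
quadratic form of this matrix at `r = 1`, on finitely supported families. The scalar kernel
`r ^ |α - β|` is positive semidefinite, so by the Schur product theorem (and by letting `r → 1`) the
operator inequalities defining `δ_P(A, B)` say exactly that `c⁻² F_B ≤ F_A ≤ c² F_B`.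

For a commuting tuple, `X ∈ D^k(H)` if and only if `F_X` is coercive, `ε ∑ ‖h_α‖² ≤ F_X(h)`: if
`ε ≤ Δ_X(I)`, a telescoping sum in one variable at a time gives coercivity with constant `4⁻ᵏ ε`;
conversely, the form of `Δ_X(I)` is a value of `F_X` at a family supported in `{0, 1}^k`.

An inequality `F_A ≤ c² F_B`, tested on families supported in `{0, e_i}`, bounds `‖A_i - B_i‖` by
`2 (c² - 1)`, so `δ_P`-convergence implies norm convergence. In the other direction the Schur test
shows that `F_A - F_B` is small relative to `∑ ‖h_α‖²` when `A` is close to `B`, and coercivity of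
`F_B` absorbs this error. For completeness, a `δ_P`-Cauchy sequence is norm convergent and uniformly
coercive, so its limit is coercive too, and the Poisson kernels converge in norm.
-/

section LatticeDistance

open Finset

/-- The `ℓ¹` distance on `ℕ^ι`; it is the exponent of `r` in the entries of `𝒫(R, rX)`. -/
def latticeDist {ι : Type*} [Fintype ι] (α β : ι → ℕ) : ℕ := ∑ i, Nat.dist (α i) (β i)

lemma latticeDist_comm {ι : Type*} [Fintype ι] (α β : ι → ℕ) :
    latticeDist α β = latticeDist β α := by
  simp only [latticeDist, Nat.dist_comm]

lemma sum_pow_le_of_injOn {ι : Type*} {t : ℝ} (ht₀ : 0 ≤ t) (ht₁ : t < 1) {s : Finset ι}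
    {f : ι → ℕ} (hf : Set.InjOn f s) : ∑ a ∈ s, t ^ f a ≤ (1 - t)⁻¹ := by
  rw [← tsum_geometric_of_lt_one ht₀ ht₁, ← sum_image hf]
  exact (summable_geometric_of_lt_one ht₀ ht₁).sum_le_tsum _ fun _ _ => by positivity

lemma sum_pow_natDist_le {t : ℝ} (ht₀ : 0 ≤ t) (ht₁ : t < 1) (s : Finset ℕ) (b : ℕ) :
    ∑ a ∈ s, t ^ Nat.dist a b ≤ 2 / (1 - t) := by
  have above : Set.InjOn (Nat.dist · b) (s.filter (b ≤ ·)) := fun x hx y hy h => by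
    simp only [mem_coe, mem_filter, Nat.dist] at hx hy h; omega
  have below : Set.InjOn (Nat.dist · b) (s.filter fun a => ¬ b ≤ a) := fun x hx y hy h => by
    simp only [mem_coe, mem_filter, Nat.dist] at hx hy h; omega
  calc ∑ a ∈ s, t ^ Nat.dist a b
      = ∑ a ∈ s with b ≤ a, t ^ Nat.dist a b + ∑ a ∈ s with ¬ b ≤ a, t ^ Nat.dist a b :=
        (sum_filter_add_sum_filter_not _ _ _).symm
    _ ≤ (1 - t)⁻¹ + (1 - t)⁻¹ :=
        add_le_add (sum_pow_le_of_injOn ht₀ ht₁ above) (sum_pow_le_of_injOn ht₀ ht₁ below)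
    _ = 2 / (1 - t) := by ring

lemma sum_pow_latticeDist_le {ι : Type*} [Fintype ι] {t : ℝ} (ht₀ : 0 ≤ t) (ht₁ : t < 1)
    (s : Finset (ι → ℕ)) (β : ι → ℕ) :
    ∑ α ∈ s, t ^ latticeDist α β ≤ (2 / (1 - t)) ^ Fintype.card ι := by
  classical
  have hs : s ⊆ Fintype.piFinset fun i => s.image (· i) := fun α hα =>
    Fintype.mem_piFinset.2 fun i => mem_image_of_mem (· i) hα
  calc ∑ α ∈ s, t ^ latticeDist α β
      ≤ ∑ α ∈ Fintype.piFinset fun i => s.image (· i), t ^ latticeDist α β :=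
        sum_le_sum_of_subset_of_nonneg hs fun _ _ _ => by positivity
    _ = ∏ i, ∑ a ∈ s.image (· i), t ^ Nat.dist a (β i) := by
        simp only [latticeDist, ← prod_pow_eq_pow_sum, prod_univ_sum]
    _ ≤ ∏ _i : ι, 2 / (1 - t) := prod_le_prod (fun _ _ => by positivity) fun i _ =>
        sum_pow_natDist_le ht₀ ht₁ _ _
    _ = (2 / (1 - t)) ^ Fintype.card ι := by rw [prod_const, card_univ]

end LatticeDistance

section KernelForm

open Finset
open scoped InnerProductSpace MatrixOrder

variable {𝕜 E ι : Type*} [RCLike 𝕜] [NormedAddCommGroup E] [InnerProductSpace 𝕜 E]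

/-- The real part of the sesquilinear form of an operator-valued kernel `K` on the families
supported in the finite set `s`, as a biadditive map. -/
def kernelForm (K : Matrix ι ι (E →L[𝕜] E)) (s : Finset ι) : (ι → E) →+ (ι → E) →+ ℝ :=
  AddMonoidHom.mk' (fun g => AddMonoidHom.mk'
      (fun h => ∑ α ∈ s, ∑ β ∈ s, RCLike.re ⟪K α β (g β), h α⟫_𝕜)
      fun _ _ => by simp [inner_add_right, sum_add_distrib])
    fun _ _ => by ext; simp [inner_add_left, sum_add_distrib]

lemma kernelForm_apply (K : Matrix ι ι (E →L[𝕜] E)) (s : Finset ι) (g h : ι → E) :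
    kernelForm K s g h = ∑ α ∈ s, ∑ β ∈ s, RCLike.re ⟪K α β (g β), h α⟫_𝕜 :=
  rfl

lemma kernelForm_sub (K L : Matrix ι ι (E →L[𝕜] E)) (s : Finset ι) (g h : ι → E) :
    kernelForm (K - L) s g h = kernelForm K s g h - kernelForm L s g h := by
  simp [kernelForm_apply, inner_sub_left]

lemma kernelForm_ofReal_smul (c : ℝ) (K : Matrix ι ι (E →L[𝕜] E)) (s : Finset ι) (g h : ι → E) :
    kernelForm ((c : 𝕜) • K) s g h = c * kernelForm K s g h := by
  simp [kernelForm_apply, inner_smul_left, mul_sum]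

lemma continuous_kernelForm_self (K : Matrix ι ι (E →L[𝕜] E)) (s : Finset ι) :
    Continuous fun h : ι → E => kernelForm K s h h := by
  simp only [kernelForm_apply]
  fun_prop

lemma kernelForm_indicator (K : Matrix ι ι (E →L[𝕜] E)) {s t : Finset ι} (hst : s ⊆ t)
    (h : ι → E) :
    kernelForm K t ((s : Set ι).indicator h) ((s : Set ι).indicator h) = kernelForm K s h h := by
  have off {α : ι} (hα : α ∉ s) : (s : Set ι).indicator h α = 0 :=
    Set.indicator_of_notMem (mem_coe.not.2 hα) h
  have on {α : ι} (hα : α ∈ s) : (s : Set ι).indicator h α = h α :=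
    Set.indicator_of_mem (mem_coe.2 hα) h
  simp only [kernelForm_apply]
  rw [← sum_subset hst fun α _ hα => sum_eq_zero fun β _ => by simp [off hα]]
  refine sum_congr rfl fun α hα => ?_
  rw [← sum_subset hst fun β _ hβ => by simp [off hβ]]
  exact sum_congr rfl fun β hβ => by rw [on hα, on hβ]

lemma abs_kernelForm_le_of_sum_row_le {K : Matrix ι ι (E →L[𝕜] E)} {s : Finset ι}
    {w : ι → ι → ℝ} {R : ℝ} (hK : ∀ α β, ‖K α β‖ ≤ w α β) (w_symm : ∀ α β, w α β = w β α)
    (row : ∀ α, ∑ β ∈ s, w α β ≤ R) (h : ι → E) :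
    |kernelForm K s h h| ≤ R * ∑ α ∈ s, ‖h α‖ ^ 2 := by
  have entry (α β : ι) : |RCLike.re ⟪K α β (h β), h α⟫_𝕜|
      ≤ w α β * ‖h β‖ ^ 2 / 2 + w α β * ‖h α‖ ^ 2 / 2 :=
    calc |RCLike.re ⟪K α β (h β), h α⟫_𝕜|
        ≤ ‖K α β (h β)‖ * ‖h α‖ := (RCLike.abs_re_le_norm _).trans (norm_inner_le_norm _ _)
      _ ≤ w α β * ‖h β‖ * ‖h α‖ := by gcongr; exact (K α β).le_of_opNorm_le (hK α β) _
      _ ≤ w α β * ‖h β‖ ^ 2 / 2 + w α β * ‖h α‖ ^ 2 / 2 := by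
        nlinarith [mul_nonneg ((norm_nonneg _).trans (hK α β)) (sq_nonneg (‖h β‖ - ‖h α‖))]
  calc |kernelForm K s h h|
      ≤ ∑ α ∈ s, ∑ β ∈ s, |RCLike.re ⟪K α β (h β), h α⟫_𝕜| :=
        (abs_sum_le_sum_abs _ _).trans (sum_le_sum fun _ _ => abs_sum_le_sum_abs _ _)
    _ ≤ ∑ α ∈ s, ∑ β ∈ s, (w α β * ‖h β‖ ^ 2 / 2 + w α β * ‖h α‖ ^ 2 / 2) :=
        sum_le_sum fun α _ => sum_le_sum fun β _ => entry α β
    _ = ∑ α ∈ s, ∑ β ∈ s, w α β * ‖h α‖ ^ 2 := by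
        simp only [sum_add_distrib]
        rw [sum_comm]
        simp only [w_symm, ← sum_add_distrib, add_halves]
    _ ≤ ∑ α ∈ s, R * ‖h α‖ ^ 2 := sum_le_sum fun α _ => by
        rw [← sum_mul]
        gcongr
        exact row α
    _ = R * ∑ α ∈ s, ‖h α‖ ^ 2 := (mul_sum _ _ _).symm

lemma kernelForm_hadamard_nonneg {G : Matrix ι ι ℝ} (hG : G.PosSemidef)
    {K : Matrix ι ι (E →L[𝕜] E)} {s : Finset ι} (hK : ∀ h, 0 ≤ kernelForm K s h h) (h : ι → E) :
    0 ≤ kernelForm (Matrix.of fun α β => (G α β : 𝕜) • K α β) s h h := by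
  classical
  obtain ⟨B, hB⟩ :=
    CStarAlgebra.nonneg_iff_eq_star_mul_self.1 (hG.submatrix ((↑) : s → ι)).nonneg
  let B' (m : s) (α : ι) : ℝ := if hα : α ∈ s then B m ⟨α, hα⟩ else 0
  have G_eq {α β : ι} (hα : α ∈ s) (hβ : β ∈ s) : G α β = ∑ m, B' m α * B' m β := by
    simpa [B', hα, hβ, Matrix.mul_apply] using congr_fun₂ hB ⟨α, hα⟩ ⟨β, hβ⟩
  have form_eq : kernelForm (Matrix.of fun α β => (G α β : 𝕜) • K α β) s h h
      = ∑ m, kernelForm K s (fun α => (B' m α : 𝕜) • h α) fun α => (B' m α : 𝕜) • h α := by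
    simp only [kernelForm_apply]
    symm
    rw [sum_comm]
    refine sum_congr rfl fun α hα => ?_
    rw [sum_comm]
    refine sum_congr rfl fun β hβ => ?_
    simp [G_eq hα hβ, inner_smul_left, inner_smul_right, sum_mul, mul_assoc]
  rw [form_eq]
  exact sum_nonneg fun m _ => hK _

end KernelForm

section OperatorMatrix

open Filter Finset Topology
open scoped InnerProductSpace

variable {𝕜 E ι : Type*} [RCLike 𝕜] [NormedAddCommGroup E] [InnerProductSpace 𝕜 E]
  [DecidableEq ι] {P Q : lp (fun _ : ι => E) 2 →L[𝕜] lp (fun _ : ι => E) 2}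
  {K L : Matrix ι ι (E →L[𝕜] E)}

/-- `K` is the matrix of the operator `P` on `ℓ²(ι; E)`: the entry `K α β` sends the coordinate
`β` of the source to the coordinate `α` of the target. -/
def HasOperatorMatrix (P : lp (fun _ : ι => E) 2 →L[𝕜] lp (fun _ : ι => E) 2)
    (K : Matrix ι ι (E →L[𝕜] E)) : Prop :=
  ∀ α β x, P (lp.single 2 β x) α = K α β x

lemma HasOperatorMatrix.sub (hP : HasOperatorMatrix P K) (hQ : HasOperatorMatrix Q L) :
    HasOperatorMatrix (P - Q) (K - L) := fun α β x => by
  simp [← hP α β x, ← hQ α β x]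

lemma HasOperatorMatrix.smul (c : 𝕜) (hP : HasOperatorMatrix P K) :
    HasOperatorMatrix (c • P) (c • K) := fun α β x => by
  simp [← hP α β x]

lemma HasOperatorMatrix.unique (hP : HasOperatorMatrix P K) (hQ : HasOperatorMatrix Q K) :
    P = Q :=
  lp.ext_continuousLinearMap (by norm_num) fun β => by
    ext x α
    exact (hP α β x).trans (hQ α β x).symm

lemma HasOperatorMatrix.of_tendsto {κ : Type*} {l : Filter κ} [l.NeBot]
    {P' : κ → lp (fun _ : ι => E) 2 →L[𝕜] lp (fun _ : ι => E) 2}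
    {K' : κ → Matrix ι ι (E →L[𝕜] E)} (h : ∀ m, HasOperatorMatrix (P' m) (K' m))
    (hP : Tendsto P' l (𝓝 P)) (hK : Tendsto K' l (𝓝 K)) : HasOperatorMatrix P K := by
  intro α β x
  have left : Tendsto (fun m => P' m (lp.single 2 β x) α) l (𝓝 (P (lp.single 2 β x) α)) :=
    tendsto_pi_nhds.1 ((lp.uniformContinuous_coe.continuous.tendsto _).comp
      (hP.eval_const _)) α
  have right : Tendsto (fun m => K' m α β x) l (𝓝 (K α β x)) :=
    (tendsto_pi_nhds.1 (tendsto_pi_nhds.1 hK α) β).eval_const x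
  exact tendsto_nhds_unique left (right.congr fun m => (h m α β x).symm)

lemma HasOperatorMatrix.re_inner_sum_single (hP : HasOperatorMatrix P K) (s : Finset ι)
    (h : ι → E) :
    RCLike.re ⟪P (∑ α ∈ s, lp.single 2 α (h α)), ∑ α ∈ s, lp.single 2 α (h α)⟫_𝕜 =
      kernelForm K s h h := by
  simp only [map_sum, sum_inner, inner_sum, lp.inner_single_right, hP _ _ _, kernelForm_apply]

lemma norm_sq_sum_single (s : Finset ι) (h : ι → E) :
    ‖∑ α ∈ s, lp.single (E := fun _ : ι => E) 2 α (h α)‖ ^ 2 = ∑ α ∈ s, ‖h α‖ ^ 2 := by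
  simpa using lp.norm_sum_single (E := fun _ : ι => E) (p := 2) (by norm_num) h s

lemma tendsto_sum_single (x : lp (fun _ : ι => E) 2) :
    Tendsto (fun s => ∑ α ∈ s, lp.single 2 α (x α)) atTop (𝓝 x) :=
  lp.hasSum_single (by norm_num) x

lemma tendsto_kernelForm (hP : HasOperatorMatrix P K) (x : lp (fun _ : ι => E) 2) :
    Tendsto (fun s => kernelForm K s x x) atTop (𝓝 (P.reApplyInnerSelf x)) := by
  simp only [← hP.re_inner_sum_single]
  exact (P.reApplyInnerSelf_continuous.tendsto x).comp (tendsto_sum_single x)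

section Complete

variable [CompleteSpace E]

lemma HasOperatorMatrix.adjoint (hP : HasOperatorMatrix P K) :
    HasOperatorMatrix (adjoint P) K.conjTranspose := fun α β x => by
  refine ext_inner_right 𝕜 fun y => ?_
  rw [Matrix.conjTranspose_apply, star_eq_adjoint, adjoint_inner_left, ← hP β α y,
    ← lp.inner_single_right, adjoint_inner_left, lp.inner_single_left]

lemma HasOperatorMatrix.isSelfAdjoint (hP : HasOperatorMatrix P K) (hK : K.IsHermitian) :
    IsSelfAdjoint P :=
  hP.adjoint.unique (hK.symm ▸ hP)

lemma HasOperatorMatrix.isPositive_iff (hP : HasOperatorMatrix P K) (hK : K.IsHermitian) :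
    P.IsPositive ↔ ∀ s h, 0 ≤ kernelForm K s h h := by
  rw [isPositive_def', and_iff_right (hP.isSelfAdjoint hK)]
  constructor
  · intro pos s h
    rw [← hP.re_inner_sum_single]
    exact pos _
  · intro pos x
    exact ge_of_tendsto' (tendsto_kernelForm hP x) fun s => pos s x

lemma HasOperatorMatrix.norm_le (hP : HasOperatorMatrix P K) (hK : K.IsHermitian) {η : ℝ}
    (hη : 0 ≤ η) (bound : ∀ s h, |kernelForm K s h h| ≤ η * ∑ α ∈ s, ‖h α‖ ^ 2) : ‖P‖ ≤ η := by
  have form_le (x) : |P.reApplyInnerSelf x| ≤ η * ‖x‖ ^ 2 := by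
    have norm_sq := ((tendsto_sum_single x).norm.pow 2).const_mul η
    simp only [norm_sq_sum_single] at norm_sq
    exact le_of_tendsto_of_tendsto' (tendsto_kernelForm hP x).abs norm_sq fun s => bound s x
  rw [norm_eq_iSup_rayleighQuotient P (hP.isSelfAdjoint hK).isSymmetric]
  refine ciSup_le fun x => ?_
  rw [rayleighQuotient, abs_div, abs_of_nonneg (sq_nonneg ‖x‖)]
  exact div_le_of_le_mul₀ (by positivity) hη (form_le x)

end Complete

end OperatorMatrix

section TupleCalculus

open scoped Matrix

variable {n : ℕ}

/-- The multi-index power `X₀ ^ p₀ ⋯ Xₙ₋₁ ^ pₙ₋₁`. -/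
def tuplePow {M : Type*} [Monoid M] (X : Fin n → M) (p : Fin n → ℕ) : M :=
  (List.ofFn fun i => X i ^ p i).prod

section Monoid

variable {M : Type*} [Monoid M]

lemma tuplePow_succ (X : Fin (n + 1) → M) (p : Fin (n + 1) → ℕ) :
    tuplePow X p = X 0 ^ p 0 * tuplePow (Fin.tail X) (Fin.tail p) := by
  simp [tuplePow, List.ofFn_succ, Fin.tail]

lemma commute_tuplePow {z : M} {X : Fin n → M} (h : ∀ i, Commute z (X i)) (p : Fin n → ℕ) :
    Commute z (tuplePow X p) :=
  Commute.list_prod_right _ _ fun _ hx => by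
    obtain ⟨i, rfl⟩ := List.mem_ofFn.1 hx
    exact (h i).pow_right _

lemma tuplePow_zero (X : Fin n → M) : tuplePow X 0 = 1 := by
  simp [tuplePow]

lemma tuplePow_single (X : Fin n → M) (i : Fin n) : tuplePow X (Pi.single i 1) = X i := by
  induction n with
  | zero => exact i.elim0
  | succ n ih =>
    rw [tuplePow_succ]
    induction i using Fin.cases with
    | zero =>
      have : Fin.tail (Pi.single (0 : Fin (n + 1)) 1 : Fin (n + 1) → ℕ) = 0 := by
        ext j; simp [Fin.tail]
      rw [this, tuplePow_zero]; simp
    | succ j =>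
      have : Fin.tail (Pi.single j.succ 1 : Fin (n + 1) → ℕ) = Pi.single j 1 := by
        ext l; simp [Fin.tail, Pi.single_apply]
      rw [this, ih]; simp [Fin.tail]

lemma tuplePow_const (x : M) (p : Fin n → ℕ) : tuplePow (fun _ => x) p = x ^ ∑ i, p i := by
  induction n with
  | zero => simp [tuplePow]
  | succ n ih =>
    rw [tuplePow_succ, Fin.sum_univ_succ, pow_add]
    exact congrArg (x ^ p 0 * ·) (ih (Fin.tail p))

lemma star_tuplePow [StarMul M] {X : Fin n → M} (hX : ∀ i j, Commute (X i) (X j))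
    (p : Fin n → ℕ) : star (tuplePow X p) = tuplePow (star X) p := by
  induction n with
  | zero => simp [tuplePow]
  | succ n ih =>
    have head_comm : Commute (X 0 ^ p 0) (tuplePow (Fin.tail X) (Fin.tail p)) :=
      commute_tuplePow (fun i => (hX 0 i.succ).pow_left _) _
    rw [tuplePow_succ, tuplePow_succ, head_comm.eq, star_mul, star_pow,
      ih (X := Fin.tail X) fun i j => hX i.succ j.succ]
    rfl

end Monoid

section StarRing

variable {A : Type*} [Ring A] [StarRing A]

/-- The defect map `(id - Φ_{X₀}) ∘ ⋯ ∘ (id - Φ_{Xₙ₋₁})`, where `Φ_{Xᵢ}(Y) = Xᵢ Y Xᵢ*`. -/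
def defectMap (X : Fin n → A) (Y : A) : A :=
  ((List.ofFn fun i => fun Z : A => Z - X i * Z * star (X i)).foldr (· ∘ ·) id) Y

/-- The kernel on `ℕⁿ` with entries `X^{(β - α)⁺} Y (X*)^{(α - β)⁺}`; for `Y = 1` it is the matrix
of `𝒫(R, X)`. -/
def toeplitzKernel (X : Fin n → A) (Y : A) : Matrix (Fin n → ℕ) (Fin n → ℕ) A :=
  Matrix.of fun α β => tuplePow X (β - α) * Y * tuplePow (star X) (α - β)

lemma defectMap_succ (X : Fin (n + 1) → A) (Y : A) :
    defectMap X Y =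
      defectMap (Fin.tail X) Y - X 0 * defectMap (Fin.tail X) Y * star (X 0) := by
  simp [defectMap, List.ofFn_succ, Fin.tail]

lemma defectMap_sub_conj {X : Fin n → A} {Z : A} (hZ : ∀ i, Commute Z (X i)) (Y : A) :
    defectMap X (Y - Z * Y * star Z) = defectMap X Y - Z * defectMap X Y * star Z := by
  induction n with
  | zero => simp [defectMap]
  | succ n ih =>
    rw [defectMap_succ, defectMap_succ, ih (X := Fin.tail X) fun i => hZ i.succ]
    set W := defectMap (Fin.tail X) Y
    have conj_comm : X 0 * (Z * W * star Z) * star (X 0) = Z * (X 0 * W * star (X 0)) * star Z :=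
      calc X 0 * (Z * W * star Z) * star (X 0)
          = (X 0 * Z) * W * (star Z * star (X 0)) := by simp only [mul_assoc]
        _ = (Z * X 0) * W * (star (X 0) * star Z) := by rw [(hZ 0).eq, (hZ 0).star_star.eq]
        _ = Z * (X 0 * W * star (X 0)) * star Z := by simp only [mul_assoc]
    simp only [mul_sub, sub_mul, conj_comm]
    abel

lemma defectMap_eq_tail {X : Fin (n + 1) → A} (hX : ∀ i j, Commute (X i) (X j)) (Y : A) :
    defectMap X Y = defectMap (Fin.tail X) (Y - X 0 * Y * star (X 0)) := by
  rw [defectMap_sub_conj (X := Fin.tail X) fun i => hX 0 i.succ, defectMap_succ]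

lemma toeplitzKernel_sub (X : Fin n → A) (Y Z : A) :
    toeplitzKernel X (Y - Z) = toeplitzKernel X Y - toeplitzKernel X Z := by
  ext α β
  simp [toeplitzKernel, mul_sub, sub_mul]

lemma toeplitzKernel_cons {X : Fin (n + 1) → A} (hX : ∀ i j, Commute (X i) (X j)) (Y : A)
    (a b : ℕ) (α β : Fin n → ℕ) :
    toeplitzKernel X Y (Fin.cons a α) (Fin.cons b β) =
      toeplitzKernel (Fin.tail X) (X 0 ^ (b - a) * Y * star (X 0) ^ (a - b)) α β := by
  have head_comm : Commute (X 0 ^ (b - a)) (tuplePow (Fin.tail X) (β - α)) :=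
    commute_tuplePow (fun i => (hX 0 i.succ).pow_left _) _
  have tail_sub (c d : ℕ) (γ δ : Fin n → ℕ) :
      Fin.tail (Fin.cons c γ - Fin.cons d δ : Fin (n + 1) → ℕ) = γ - δ := rfl
  simp only [toeplitzKernel, Matrix.of_apply, tuplePow_succ, tail_sub, Pi.sub_apply,
    Fin.cons_zero, Pi.star_apply, head_comm.left_comm, mul_assoc]
  rfl

lemma conj_toeplitzKernel {X : Fin n → A} {Z : A} (hZ : ∀ i, Commute Z (X i)) (Y : A) (i j : ℕ)
    (α β : Fin n → ℕ) :
    Z ^ i * toeplitzKernel X Y α β * star Z ^ j =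
      toeplitzKernel X (Z ^ i * Y * star Z ^ j) α β := by
  have left : Commute (Z ^ i) (tuplePow X (β - α)) :=
    commute_tuplePow (fun l => (hZ l).pow_left _) _
  have right : Commute (star Z ^ j) (tuplePow (star X) (α - β)) :=
    commute_tuplePow (fun l => (hZ l).star_star.pow_left _) _
  simp only [toeplitzKernel, Matrix.of_apply, mul_assoc, ← right.eq, left.left_comm]

lemma toeplitzKernel_isHermitian {X : Fin n → A} (hX : ∀ i j, Commute (X i) (X j)) {Y : A}
    (hY : IsSelfAdjoint Y) : (toeplitzKernel X Y).IsHermitian := by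
  ext α β
  simp only [toeplitzKernel, Matrix.conjTranspose_apply, Matrix.of_apply, ← star_tuplePow hX,
    star_mul, star_star, hY.star_eq, mul_assoc]

lemma toeplitzKernel_const {z : A} (hz : IsSelfAdjoint z) (α β : Fin n → ℕ) :
    toeplitzKernel (fun _ => z) 1 α β = z ^ latticeDist α β := by
  have star_const : star (fun _ : Fin n => z) = fun _ => z := funext fun _ => hz.star_eq
  rw [toeplitzKernel, Matrix.of_apply, star_const, tuplePow_const, tuplePow_const, mul_one,
    ← pow_add, ← Finset.sum_add_distrib, latticeDist]
  exact congrArg _ (Finset.sum_congr rfl fun i _ => Nat.add_comm _ _)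

lemma defectMap_const {z : A} (hz : IsSelfAdjoint z) :
    defectMap (fun _ : Fin n => z) 1 = (1 - z ^ 2) ^ n := by
  induction n with
  | zero => simp [defectMap]
  | succ n ih =>
    rw [defectMap_succ]
    change defectMap (fun _ : Fin n => z) 1 - z * defectMap (fun _ : Fin n => z) 1 * star z = _
    have comm : Commute z ((1 - z ^ 2) ^ n) :=
      ((Commute.one_right z).sub_right ((Commute.refl z).pow_right 2)).pow_right n
    rw [ih, hz.star_eq, comm.eq, mul_assoc, pow_succ (1 - z ^ 2), mul_one_sub, sq z]

end StarRing

end TupleCalculus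

section OneVariableToeplitz

open Filter Finset Topology

variable {V : Type*} [AddCommGroup V]

/-- The sums `∑_{b < m} L ^ (m - b) (h b)`, computed by Horner's rule. -/
def hornerSum (L : AddMonoid.End V) (h : ℕ → V) : ℕ → V
  | 0 => 0
  | m + 1 => L (hornerSum L h m + h m)

lemma hornerSum_eq_sum (L : AddMonoid.End V) (h : ℕ → V) (m : ℕ) :
    hornerSum L h m = ∑ b ∈ range m, (L ^ (m - b)) (h b) := by
  induction m with
  | zero => rfl
  | succ m ih =>
    rw [hornerSum, ih, sum_range_succ, map_add, map_sum]
    congr 1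
    · refine sum_congr rfl fun b hb => ?_
      rw [Nat.succ_sub (mem_range.1 hb).le, pow_succ']
      rfl
    · simp

lemma sum_toeplitz_eq_sum_hornerSum {W : Type*} [AddCommGroup W] (B : V →+ V →+ W)
    (L : AddMonoid.End V) (h : ℕ → V) (m : ℕ) :
    ∑ a ∈ range m, ∑ b ∈ range m, B ((L ^ (a - b)) (h b)) ((L ^ (b - a)) (h a)) =
      ∑ c ∈ range m, (B (hornerSum L h c + h c) (hornerSum L h c + h c) -
          B (hornerSum L h (c + 1)) (hornerSum L h (c + 1))) +
        B (hornerSum L h m) (hornerSum L h m) := by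
  induction m with
  | zero => simp [hornerSum]
  | succ m ih =>
    have row : ∑ a ∈ range m, B ((L ^ (a - m)) (h m)) ((L ^ (m - a)) (h a)) =
        B (h m) (hornerSum L h m) := by
      rw [hornerSum_eq_sum, map_sum]
      exact sum_congr rfl fun a ha => by simp [Nat.sub_eq_zero_of_le (mem_range.1 ha).le]
    have column : ∑ b ∈ range m, B ((L ^ (m - b)) (h b)) ((L ^ (b - m)) (h m)) =
        B (hornerSum L h m) (h m) := by
      rw [hornerSum_eq_sum, map_sum, AddMonoidHom.finsetSum_apply]
      exact sum_congr rfl fun b hb => by simp [Nat.sub_eq_zero_of_le (mem_range.1 hb).le]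
    rw [sum_range_succ]
    simp_rw [sum_range_succ (n := m)]
    rw [sum_add_distrib, ih, row, column]
    simp only [map_add, AddMonoidHom.add_apply, Nat.sub_self, pow_zero, AddMonoid.End.coe_one,
      id_eq]
    abel

lemma apply_self_nonneg_of_tendsto {B : V →+ V →+ ℝ} {L : AddMonoid.End V}
    (hL : ∀ v, B (L v) (L v) ≤ B v v) {v : V}
    (hv : Tendsto (fun j : ℕ => B ((L ^ j) v) ((L ^ j) v)) atTop (𝓝 0)) : 0 ≤ B v v :=
  Antitone.le_of_tendsto (antitone_nat_of_succ_le fun j => by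
    rw [pow_succ']; exact hL ((L ^ j) v)) hv 0

section LowerBound

variable {N : V → ℝ} (N_zero : N 0 = 0) (N_sub : ∀ x y, N (x - y) ≤ 2 * (N x + N y))
  {L : AddMonoid.End V} (N_map : ∀ v, N (L v) ≤ N v)

include N_zero N_sub N_map in
lemma sum_le_four_mul_sum_hornerSum (h : ℕ → V) (m : ℕ) :
    ∑ a ∈ range m, N (h a) ≤ 4 * ∑ a ∈ range m, N (hornerSum L h a + h a) := by
  have N_nonneg (x : V) : 0 ≤ N x := by linarith [N_sub x x, sub_self x ▸ N_zero]
  have stronger (m : ℕ) : ∑ a ∈ range m, N (h a) + 2 * N (hornerSum L h m) ≤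
      4 * ∑ a ∈ range m, N (hornerSum L h a + h a) := by
    induction m with
    | zero => simp [hornerSum, N_zero]
    | succ m ih =>
      have split := N_sub (hornerSum L h m + h m) (hornerSum L h m)
      rw [add_sub_cancel_left] at split
      rw [sum_range_succ, sum_range_succ, hornerSum]
      linarith [N_map (hornerSum L h m + h m)]
  linarith [stronger m, N_nonneg (hornerSum L h m)]

include N_zero N_sub N_map in
lemma mul_sum_le_sum_toeplitz {B : V →+ V →+ ℝ} (B_nonneg : ∀ v, 0 ≤ B v v) {ε : ℝ}
    (hε : 0 ≤ ε) (gap : ∀ v, ε * N v ≤ B v v - B (L v) (L v)) (h : ℕ → V) (m : ℕ) :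
    ε / 4 * ∑ a ∈ range m, N (h a) ≤
      ∑ a ∈ range m, ∑ b ∈ range m, B ((L ^ (a - b)) (h b)) ((L ^ (b - a)) (h a)) := by
  calc ε / 4 * ∑ a ∈ range m, N (h a)
      ≤ ε / 4 * (4 * ∑ a ∈ range m, N (hornerSum L h a + h a)) := by
        gcongr
        exact sum_le_four_mul_sum_hornerSum N_zero N_sub N_map h m
    _ = ∑ a ∈ range m, ε * N (hornerSum L h a + h a) := by rw [← mul_sum]; ring
    _ ≤ ∑ c ∈ range m, (B (hornerSum L h c + h c) (hornerSum L h c + h c) -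
          B (hornerSum L h (c + 1)) (hornerSum L h (c + 1))) := sum_le_sum fun c _ => gap _
    _ ≤ ∑ a ∈ range m, ∑ b ∈ range m, B ((L ^ (a - b)) (h b)) ((L ^ (b - a)) (h a)) := by
        rw [sum_toeplitz_eq_sum_hornerSum]
        exact le_add_of_nonneg_right (B_nonneg _)

end LowerBound

end OneVariableToeplitz

section ToeplitzPositivity

open Filter Finset Topology
open scoped InnerProductSpace Matrix

variable {𝕜 E : Type*} [RCLike 𝕜] [NormedAddCommGroup E] [InnerProductSpace 𝕜 E] {n : ℕ}

/-- The operator `Z` applied to every member of a family of vectors. -/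
def pointwise {ι : Type*} (Z : E →L[𝕜] E) : AddMonoid.End (ι → E) :=
  AddMonoidHom.compLeft (Z : E →+ E) ι

lemma pointwise_pow_apply {ι : Type*} (Z : E →L[𝕜] E) (j : ℕ) (h : ι → E) (α : ι) :
    (pointwise Z ^ j) h α = (Z ^ j) (h α) := by
  induction j with
  | zero => rfl
  | succ j ih =>
    rw [pow_succ', pow_succ']
    exact congrArg Z ih

lemma tendsto_pointwise_pow {ι : Type*} {Z : E →L[𝕜] E} (hZ : ‖Z‖ < 1) (h : ι → E) :
    Tendsto (fun j : ℕ => (pointwise Z ^ j) h) atTop (𝓝 0) := by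
  refine tendsto_pi_nhds.2 fun α => ?_
  simp only [pointwise_pow_apply]
  exact (tendsto_pow_atTop_nhds_zero_of_norm_lt_one hZ).eval_const (h α)

/-- The cube `{0, …, m - 1} ^ n` of multi-indices. -/
def cube (n m : ℕ) : Finset (Fin n → ℕ) :=
  Fintype.piFinset fun _ => range m

lemma mem_cube {m : ℕ} {α : Fin n → ℕ} : α ∈ cube n m ↔ ∀ i, α i < m := by
  simp [cube]

lemma cube_zero (m : ℕ) : cube 0 m = {0} := by
  ext α
  simp [mem_cube, Subsingleton.elim α 0]

lemma sum_cube_succ {M : Type*} [AddCommMonoid M] (m : ℕ) (f : (Fin (n + 1) → ℕ) → M) :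
    ∑ α ∈ cube (n + 1) m, f α = ∑ a ∈ range m, ∑ α ∈ cube n m, f (Fin.cons a α) := by
  rw [← sum_product']
  refine (sum_nbij' (fun p => Fin.cons p.1 p.2) (fun α => (α 0, Fin.tail α)) ?_ ?_ ?_ ?_ ?_).symm
  · simp [mem_cube, Fin.forall_fin_succ]
  · simp [mem_cube, Fin.forall_fin_succ, Fin.tail]
  · simp
  · simp
  · simp

lemma exists_subset_cube (s : Finset (Fin n → ℕ)) : ∃ m, s ⊆ cube n m := by
  refine ⟨s.sup (fun α => ∑ i, α i) + 1, fun α hα => mem_cube.2 fun i => Nat.lt_succ_of_le ?_⟩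
  exact (single_le_sum (fun _ _ => Nat.zero_le _) (mem_univ i)).trans
    (le_sup (f := fun α : Fin n → ℕ => ∑ i, α i) hα)

/-- The one-variable section `α ↦ h (a, α)` of a family of vectors. -/
def headSlice (h : (Fin (n + 1) → ℕ) → E) (a : ℕ) (α : Fin n → ℕ) : E :=
  h (Fin.cons a α)

variable [CompleteSpace E]

lemma kernelForm_toeplitzKernel_conj {X : Fin n → E →L[𝕜] E} {Z : E →L[𝕜] E}
    (hZ : ∀ i, Commute Z (X i)) (Y : E →L[𝕜] E) (s : Finset (Fin n → ℕ)) (i j : ℕ)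
    (g h : (Fin n → ℕ) → E) :
    kernelForm (toeplitzKernel X (Z ^ i * Y * star Z ^ j)) s g h =
      kernelForm (toeplitzKernel X Y) s ((pointwise (star Z) ^ j) g)
        ((pointwise (star Z) ^ i) h) := by
  simp only [kernelForm_apply, ← conj_toeplitzKernel hZ, pointwise_pow_apply, ← star_pow Z i]
  simp only [ContinuousLinearMap.star_eq_adjoint, ContinuousLinearMap.adjoint_inner_right,
    mul_apply_eq_comp]

lemma kernelForm_toeplitzKernel_cube_succ {X : Fin (n + 1) → E →L[𝕜] E}
    (hX : ∀ i j, Commute (X i) (X j)) (Y : E →L[𝕜] E) (m : ℕ) (h : (Fin (n + 1) → ℕ) → E) :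
    kernelForm (toeplitzKernel X Y) (cube (n + 1) m) h h =
      ∑ a ∈ range m, ∑ b ∈ range m, kernelForm (toeplitzKernel (Fin.tail X) Y) (cube n m)
        ((pointwise (star (X 0)) ^ (a - b)) (headSlice h b))
        ((pointwise (star (X 0)) ^ (b - a)) (headSlice h a)) := by
  simp_rw [← kernelForm_toeplitzKernel_conj (X := Fin.tail X) fun i => hX 0 i.succ]
  simp only [kernelForm_apply, sum_cube_succ, toeplitzKernel_cons hX]
  exact sum_congr rfl fun a _ => sum_comm

lemma kernelForm_toeplitzKernel_sub_conj {X : Fin n → E →L[𝕜] E} {Z : E →L[𝕜] E}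
    (hZ : ∀ i, Commute Z (X i)) (Y : E →L[𝕜] E) (s : Finset (Fin n → ℕ)) (h : (Fin n → ℕ) → E) :
    kernelForm (toeplitzKernel X (Y - Z * Y * star Z)) s h h =
      kernelForm (toeplitzKernel X Y) s h h -
        kernelForm (toeplitzKernel X Y) s (pointwise (star Z) h) (pointwise (star Z) h) := by
  rw [toeplitzKernel_sub, kernelForm_sub]
  simpa using kernelForm_toeplitzKernel_conj hZ Y s 1 1 h h

lemma mul_sum_le_kernelForm_cube {X : Fin n → E →L[𝕜] E} (hX : ∀ i j, Commute (X i) (X j))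
    (X_lt : ∀ i, ‖X i‖ < 1) {Y : E →L[𝕜] E} {ε : ℝ} (hε : 0 ≤ ε)
    (hY : ∀ x, ε * ‖x‖ ^ 2 ≤ RCLike.re ⟪defectMap X Y x, x⟫_𝕜) (m : ℕ) (h : (Fin n → ℕ) → E) :
    ε / 4 ^ n * ∑ α ∈ cube n m, ‖h α‖ ^ 2 ≤
      kernelForm (toeplitzKernel X Y) (cube n m) h h := by
  induction n generalizing Y with
  | zero => simpa [cube_zero, kernelForm_apply, toeplitzKernel, tuplePow, defectMap] using hY (h 0)
  | succ n ih =>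
    set L : AddMonoid.End ((Fin n → ℕ) → E) := pointwise (star (X 0))
    set B := kernelForm (toeplitzKernel (Fin.tail X) Y) (cube n m)
    have norm_star_lt : ‖star (X 0)‖ < 1 := (norm_star (X 0)).trans_lt (X_lt 0)
    have gap (v : (Fin n → ℕ) → E) :
        ε / 4 ^ n * ∑ α ∈ cube n m, ‖v α‖ ^ 2 ≤ B v v - B (L v) (L v) := by
      rw [← kernelForm_toeplitzKernel_sub_conj (X := Fin.tail X) fun i => hX 0 i.succ]
      exact ih (X := Fin.tail X) (fun i j => hX i.succ j.succ) (fun i => X_lt i.succ)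
        (by simpa only [← defectMap_eq_tail hX] using hY) v
    have B_nonneg (v : (Fin n → ℕ) → E) : 0 ≤ B v v := by
      refine apply_self_nonneg_of_tendsto (L := L)
        (fun v => sub_nonneg.1 (le_trans (by positivity) (gap v))) ?_
      have B_tendsto : Tendsto (fun w => B w w) (𝓝 0) (𝓝 0) := by
        simpa using
          (continuous_kernelForm_self (toeplitzKernel (Fin.tail X) Y) (cube n m)).tendsto 0
      exact B_tendsto.comp (tendsto_pointwise_pow norm_star_lt v)
    rw [kernelForm_toeplitzKernel_cube_succ hX, sum_cube_succ, pow_succ, ← div_div]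
    refine mul_sum_le_sum_toeplitz (N := fun v => ∑ α ∈ cube n m, ‖v α‖ ^ 2) (by simp)
      (fun x y => ?_) (fun v => ?_) B_nonneg (by positivity) gap (headSlice h) m
    · rw [← sum_add_distrib, mul_sum]
      refine sum_le_sum fun α _ => ?_
      exact (pow_le_pow_left₀ (norm_nonneg _) (norm_sub_le _ _) 2).trans
        (add_sq_le (a := ‖x α‖) (b := ‖y α‖))
    · refine sum_le_sum fun α _ => ?_
      gcongr
      exact (star (X 0)).le_of_opNorm_le_of_le norm_star_lt.le le_rfl |>.trans_eq (one_mul _)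

lemma mul_sum_le_kernelForm {X : Fin n → E →L[𝕜] E} (hX : ∀ i j, Commute (X i) (X j))
    (X_lt : ∀ i, ‖X i‖ < 1) {Y : E →L[𝕜] E} {ε : ℝ} (hε : 0 ≤ ε)
    (hY : ∀ x, ε * ‖x‖ ^ 2 ≤ RCLike.re ⟪defectMap X Y x, x⟫_𝕜) (s : Finset (Fin n → ℕ))
    (h : (Fin n → ℕ) → E) :
    ε / 4 ^ n * ∑ α ∈ s, ‖h α‖ ^ 2 ≤ kernelForm (toeplitzKernel X Y) s h h := by
  obtain ⟨m, hm⟩ := exists_subset_cube s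
  calc ε / 4 ^ n * ∑ α ∈ s, ‖h α‖ ^ 2
      = ε / 4 ^ n * ∑ α ∈ s, ‖(s : Set _).indicator h α‖ ^ 2 := by
        congr 1
        exact sum_congr rfl fun α hα => by rw [Set.indicator_of_mem (mem_coe.2 hα)]
    _ ≤ ε / 4 ^ n * ∑ α ∈ cube n m, ‖(s : Set _).indicator h α‖ ^ 2 := by gcongr
    _ ≤ kernelForm (toeplitzKernel X Y) (cube n m) ((s : Set _).indicator h)
          ((s : Set _).indicator h) := mul_sum_le_kernelForm_cube hX X_lt hε hY m _
    _ = kernelForm (toeplitzKernel X Y) s h h := kernelForm_indicator _ hm h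

lemma exists_kernelForm_cube_two_eq {X : Fin n → E →L[𝕜] E} (hX : ∀ i j, Commute (X i) (X j))
    (Y : E →L[𝕜] E) (x : E) : ∃ h : (Fin n → ℕ) → E, h 0 = x ∧
      kernelForm (toeplitzKernel X Y) (cube n 2) h h = RCLike.re ⟪defectMap X Y x, x⟫_𝕜 := by
  induction n generalizing Y with
  | zero =>
    exact ⟨fun _ => x, rfl, by simp [cube_zero, kernelForm_apply, toeplitzKernel, tuplePow,
      defectMap]⟩
  | succ n ih =>
    obtain ⟨g, g_zero, hg⟩ := ih (X := Fin.tail X) (fun i j => hX i.succ j.succ)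
      (Y - X 0 * Y * star (X 0))
    let h (α : Fin (n + 1) → ℕ) : E :=
      if α 0 = 0 then g (Fin.tail α) else (-pointwise (star (X 0)) g) (Fin.tail α)
    have slice_zero : headSlice h 0 = g := by ext; simp [headSlice, h]
    have slice_one : headSlice h 1 = -pointwise (star (X 0)) g := by ext; simp [headSlice, h]
    refine ⟨h, if_pos rfl |>.trans g_zero, ?_⟩
    rw [defectMap_eq_tail hX, ← hg,
      kernelForm_toeplitzKernel_sub_conj (X := Fin.tail X) fun i => hX 0 i.succ,
      kernelForm_toeplitzKernel_cube_succ hX]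
    simp only [sum_range_succ, range_one, sum_singleton, tsub_zero, zero_tsub, tsub_self, pow_zero,
      pow_one, AddMonoid.End.coe_one, id_eq, slice_zero, slice_one, map_neg,
      AddMonoidHom.neg_apply]
    ring

lemma kernelForm_toeplitzKernel_pair (X : Fin n → E →L[𝕜] E) (i : Fin n)
    (h : (Fin n → ℕ) → E) :
    kernelForm (toeplitzKernel X 1) {0, Pi.single i 1} h h =
      ‖h 0‖ ^ 2 + ‖h (Pi.single i 1)‖ ^ 2 +
        2 * RCLike.re ⟪X i (h (Pi.single i 1)), h 0⟫_𝕜 := by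
  have zero_ne : (0 : Fin n → ℕ) ≠ Pi.single i 1 := (Pi.single_ne_zero_iff.2 one_ne_zero).symm
  have adjoint_entry : RCLike.re ⟪star (X i) (h 0), h (Pi.single i 1)⟫_𝕜 =
      RCLike.re ⟪X i (h (Pi.single i 1)), h 0⟫_𝕜 := by
    rw [ContinuousLinearMap.star_eq_adjoint, ContinuousLinearMap.adjoint_inner_left,
      inner_re_symm]
  simp only [kernelForm_apply, sum_pair zero_ne, toeplitzKernel, Matrix.of_apply, tsub_self,
    tsub_zero, zero_tsub, tuplePow_zero, tuplePow_single, one_mul, mul_one, Pi.star_apply,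
    adjoint_entry, one_apply_eq_self, inner_self_eq_norm_sq]
  ring

lemma posSemidef_pow_latticeDist {r : ℝ} (hr : r ∈ Set.Ico 0 1) :
    (Matrix.of fun α β : Fin n → ℕ => r ^ latticeDist α β).PosSemidef := by
  refine ⟨by ext; simp [latticeDist_comm], fun x => ?_⟩
  set z : ℝ →L[ℝ] ℝ := algebraMap ℝ (ℝ →L[ℝ] ℝ) r with z_def
  have norm_z : ‖z‖ < 1 := by simpa [z_def, abs_of_nonneg hr.1] using hr.2
  have kernel_eq (α β : Fin n → ℕ) :
      toeplitzKernel (fun _ => z) 1 α β = r ^ latticeDist α β • 1 := by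
    rw [toeplitzKernel_const (.algebraMap _ (.all r)), ← map_pow, Algebra.algebraMap_eq_smul_one]
  have defect_eq : defectMap (fun _ : Fin n => z) 1 =
      (1 - r ^ 2) ^ n • 1 := by
    rw [defectMap_const (.algebraMap _ (.all r)), ← Algebra.algebraMap_eq_smul_one, map_pow,
      map_sub, map_pow, map_one]
  have defect_nonneg (y : ℝ) : 0 * ‖y‖ ^ 2 ≤
      RCLike.re ⟪defectMap (fun _ : Fin n => z) 1 y, y⟫_ℝ := by
    have : 0 ≤ (1 - r ^ 2) ^ n := pow_nonneg (by nlinarith [hr.1, hr.2]) n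
    rw [defect_eq]
    simpa [mul_left_comm y] using mul_nonneg this (mul_self_nonneg y)
  have nonneg := mul_sum_le_kernelForm (X := fun _ : Fin n => z) (fun _ _ => Commute.refl z)
    (fun _ => norm_z) le_rfl defect_nonneg x.support x
  simpa [kernelForm_apply, kernel_eq, Finsupp.sum, mul_assoc, mul_comm, mul_left_comm]
    using nonneg

end ToeplitzPositivity

section Coercivity

open Finset
open scoped InnerProductSpace

variable {𝕜 E : Type*} [RCLike 𝕜] [NormedAddCommGroup E] [InnerProductSpace 𝕜 E]
  [CompleteSpace E] {n : ℕ}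

/-- The form of the kernel `𝒫(R, X)` is bounded below by `ε` times the squared `ℓ²`-norm. -/
def IsCoerciveTuple (X : Fin n → E →L[𝕜] E) (ε : ℝ) : Prop :=
  ∀ s h, ε * ∑ α ∈ s, ‖h α‖ ^ 2 ≤ kernelForm (toeplitzKernel X 1) s h h

lemma IsCoerciveTuple.norm_lt_one {X : Fin n → E →L[𝕜] E} {ε : ℝ} (hX : IsCoerciveTuple X ε)
    (hε : 0 < ε) (i : Fin n) : ‖X i‖ < 1 := by
  have contraction (y : E) : (1 + ε) * ‖X i y‖ ^ 2 ≤ ‖y‖ ^ 2 := by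
    have zero_ne : (0 : Fin n → ℕ) ≠ Pi.single i 1 := (Pi.single_ne_zero_iff.2 one_ne_zero).symm
    have pair := hX {0, Pi.single i 1} (Function.update (fun _ => y) 0 (-X i y))
    rw [kernelForm_toeplitzKernel_pair, sum_pair zero_ne, Function.update_self,
      Function.update_of_ne zero_ne.symm, norm_neg, inner_neg_right, map_neg,
      inner_self_eq_norm_sq] at pair
    nlinarith [mul_nonneg hε.le (sq_nonneg ‖y‖)]
  have norm_le : ‖X i‖ ≤ √(1 / (1 + ε)) :=
    (X i).opNorm_le_bound (Real.sqrt_nonneg _) fun y => by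
      refine abs_le_of_sq_le_sq' ?_ (by positivity) |>.2
      rw [mul_pow, Real.sq_sqrt (by positivity), one_div_mul_eq_div, le_div_iff₀' (by positivity)]
      exact contraction y
  refine norm_le.trans_lt ((Real.sqrt_lt' one_pos).2 ?_)
  rw [one_pow, div_lt_one (by positivity)]
  linarith

lemma IsCoerciveTuple.le_defectMap {X : Fin n → E →L[𝕜] E} {ε : ℝ} (hX : IsCoerciveTuple X ε)
    (hε : 0 ≤ ε) (comm : ∀ i j, Commute (X i) (X j)) (x : E) :
    ε * ‖x‖ ^ 2 ≤ RCLike.re ⟪defectMap X 1 x, x⟫_𝕜 := by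
  obtain ⟨h, h_zero, hh⟩ := exists_kernelForm_cube_two_eq comm 1 x
  have zero_mem : (0 : Fin n → ℕ) ∈ cube n 2 := mem_cube.2 fun _ => two_pos
  calc ε * ‖x‖ ^ 2
      ≤ ε * ∑ α ∈ cube n 2, ‖h α‖ ^ 2 := by
        gcongr
        rw [← h_zero]
        exact single_le_sum (f := fun α => ‖h α‖ ^ 2) (fun _ _ => sq_nonneg _) zero_mem
    _ ≤ RCLike.re ⟪defectMap X 1 x, x⟫_𝕜 := (hX _ h).trans_eq hh

lemma norm_sub_le_of_kernelForm_le {A T : Fin n → E →L[𝕜] E} {c : ℝ} (hc : 1 ≤ c)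
    (hA : ∀ s h, kernelForm (toeplitzKernel A 1) s h h ≤ c * kernelForm (toeplitzKernel T 1) s h h)
    {i : Fin n} (hT : ‖T i‖ ≤ 1) : ‖A i - T i‖ ≤ 2 * (c - 1) := by
  refine opNorm_le_of_re_inner_le (𝕜 := 𝕜) (by linarith) fun y x norm_y norm_x => ?_
  have pair := hA {0, Pi.single i 1} (Function.update (fun _ => y) 0 x)
  rw [kernelForm_toeplitzKernel_pair, kernelForm_toeplitzKernel_pair, Function.update_self,
    Function.update_of_ne (Pi.single_ne_zero_iff.2 one_ne_zero), norm_x, norm_y] at pair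
  have inner_le : RCLike.re ⟪T i y, x⟫_𝕜 ≤ 1 :=
    calc RCLike.re ⟪T i y, x⟫_𝕜 ≤ ‖T i y‖ * ‖x‖ := re_inner_le_norm _ _
      _ ≤ 1 := by
        rw [norm_x, mul_one]
        exact ((T i).le_of_opNorm_le hT y).trans_eq (by rw [norm_y, mul_one])
  rw [sub_apply, inner_sub_left, map_sub]
  nlinarith

end Coercivity

section PositiveInvertible

open scoped InnerProductSpace

lemma isSelfAdjoint_defectMap {A : Type*} [Ring A] [StarRing A] {n : ℕ} (X : Fin n → A) {Y : A}
    (hY : IsSelfAdjoint Y) : IsSelfAdjoint (defectMap X Y) := by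
  induction n with
  | zero => simpa [defectMap] using hY
  | succ n ih =>
    rw [defectMap_succ]
    exact (ih _).sub ((ih _).conjugate (X 0))

lemma isPositive_and_isUnit_iff {S : H →L[ℂ] H} (hS : IsSelfAdjoint S) :
    S.IsPositive ∧ IsUnit S ↔ ∃ ε : ℝ, 0 < ε ∧ ∀ x, ε * ‖x‖ ^ 2 ≤ RCLike.re ⟪S x, x⟫_ℂ := by
  have algebraMap_le_iff (ε : ℝ) : algebraMap ℝ (H →L[ℂ] H) ε ≤ S ↔
      ∀ x, ε * ‖x‖ ^ 2 ≤ RCLike.re ⟪S x, x⟫_ℂ := by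
    rw [le_def, isPositive_def', and_iff_right (hS.sub (.algebraMap _ (.all ε)))]
    refine forall_congr' fun x => ?_
    rw [reApplyInnerSelf_apply, sub_apply, inner_sub_left, map_sub, sub_nonneg]
    simp [Algebra.algebraMap_eq_smul_one, inner_smul_left_eq_smul, ← inner_self_eq_norm_sq (𝕜 := ℂ)]
  simp only [← algebraMap_le_iff, ← nonneg_iff_isPositive]
  constructor
  · rintro ⟨nonneg, unit⟩
    cases subsingleton_or_nontrivial H
    · exact ⟨1, one_pos, (Subsingleton.elim _ _).le⟩
    · exact (CFC.exists_pos_algebraMap_le_iff hS).2 fun x hx =>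
        (unit.isStrictlyPositive nonneg).spectrum_pos hx
  · rintro ⟨ε, hε, le⟩
    have strictlyPositive : IsStrictlyPositive (algebraMap ℝ (H →L[ℂ] H) ε) :=
      isStrictlyPositive_algebraMap hε
    exact ⟨strictlyPositive.nonneg.trans le, CStarAlgebra.isUnit_of_le _ le strictlyPositive⟩

lemma memPolydisk_iff {X : Fin k → H →L[ℂ] H} :
    memPolydisk X ↔ (∀ i j, Commute (X i) (X j)) ∧ ∃ ε : ℝ, 0 < ε ∧ IsCoerciveTuple X ε := by
  have defect_iff := isPositive_and_isUnit_iff (isSelfAdjoint_defectMap X (IsSelfAdjoint.one _))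
  constructor
  · rintro ⟨comm, norm_lt, defect_pos⟩
    obtain ⟨ε, hε, le_defect⟩ := defect_iff.1 defect_pos
    exact ⟨comm, _, by positivity, mul_sum_le_kernelForm comm norm_lt hε.le le_defect⟩
  · rintro ⟨comm, ε, hε, hX⟩
    exact ⟨comm, hX.norm_lt_one hε, defect_iff.2 ⟨ε, hε, hX.le_defectMap hε.le comm⟩⟩

end PositiveInvertible

section Perturbation

open Filter Finset Topology

variable {𝕜 E : Type*} [RCLike 𝕜] [NormedAddCommGroup E] [InnerProductSpace 𝕜 E]

/-- Real numbers `r ≤ s` controlling an operator `T` and its perturbation `A`. Unlike the bare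
inequality `‖A - T‖ ≤ s - r`, this relation passes to products. -/
structure PerturbationBound (A T : E →L[𝕜] E) (s r : ℝ) : Prop where
  norm_le : ‖T‖ ≤ r
  norm_sub_le : ‖A - T‖ ≤ s - r

namespace PerturbationBound

variable {n : ℕ} {A T A' T' : E →L[𝕜] E} {s r s' r' : ℝ}

lemma one : PerturbationBound (1 : E →L[𝕜] E) 1 1 1 :=
  ⟨norm_id_le, by simp⟩

lemma mul (h : PerturbationBound A T s r) (h' : PerturbationBound A' T' s' r') :
    PerturbationBound (A * A') (T * T') (s * s') (r * r') where
  norm_le := norm_mul_le_of_le h.norm_le h'.norm_le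
  norm_sub_le :=
    have norm_A' : ‖A'‖ ≤ s' := by
      linarith [norm_le_norm_add_norm_sub T' A', h'.norm_le, norm_sub_rev A' T', h'.norm_sub_le]
    calc ‖A * A' - T * T'‖ = ‖(A - T) * A' + T * (A' - T')‖ := by noncomm_ring
      _ ≤ (s - r) * s' + r * (s' - r') := norm_add_le_of_le
        (norm_mul_le_of_le h.norm_sub_le norm_A') (norm_mul_le_of_le h.norm_le h'.norm_sub_le)
      _ = s * s' - r * r' := by ring

lemma pow (h : PerturbationBound A T s r) (j : ℕ) :
    PerturbationBound (A ^ j) (T ^ j) (s ^ j) (r ^ j) := by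
  induction j with
  | zero => simpa only [pow_zero] using one
  | succ j ih => simpa only [pow_succ] using ih.mul h

lemma tuplePow {A T : Fin n → E →L[𝕜] E} (h : ∀ i, PerturbationBound (A i) (T i) s r)
    (p : Fin n → ℕ) :
    PerturbationBound (_root_.tuplePow A p) (_root_.tuplePow T p) (s ^ ∑ i, p i)
      (r ^ ∑ i, p i) := by
  induction n with
  | zero => simpa [_root_.tuplePow] using one
  | succ n ih =>
    rw [tuplePow_succ, tuplePow_succ, Fin.sum_univ_succ, pow_add, pow_add]
    exact ((h 0).pow _).mul (ih (A := Fin.tail A) (T := Fin.tail T) (fun i => h i.succ) _)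

variable [CompleteSpace E]

lemma star (h : PerturbationBound A T s r) : PerturbationBound (star A) (star T) s r :=
  ⟨(norm_star T).trans_le h.norm_le, by rw [← star_sub, norm_star]; exact h.norm_sub_le⟩

lemma toeplitzKernel {A T : Fin n → E →L[𝕜] E} (h : ∀ i, PerturbationBound (A i) (T i) s r)
    (α β : Fin n → ℕ) :
    PerturbationBound (_root_.toeplitzKernel A 1 α β) (_root_.toeplitzKernel T 1 α β)
      (s ^ latticeDist α β) (r ^ latticeDist α β) := by
  have dist_eq : latticeDist α β = ∑ i, (β - α) i + ∑ i, (α - β) i := by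
    rw [← sum_add_distrib]
    exact sum_congr rfl fun i _ => Nat.add_comm _ _
  simp only [_root_.toeplitzKernel, Matrix.of_apply, mul_one, dist_eq, pow_add]
  exact (PerturbationBound.tuplePow h _).mul
    (PerturbationBound.tuplePow (A := Star.star A) (fun i => (h i).star) _)

end PerturbationBound

lemma pow_sub_pow_le {r s t : ℝ} (hr : 0 ≤ r) (hrs : r ≤ s) (hst : s < t) (d : ℕ) :
    s ^ d - r ^ d ≤ (s - r) / (t - s) * t ^ d := by
  have gap : 0 < t - s := sub_pos.2 hst
  rw [div_mul_eq_mul_div, le_div_iff₀ gap]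
  induction d with
  | zero => simpa using hrs
  | succ d ih =>
    have hs : 0 ≤ s := hr.trans hrs
    have pow_le : r ^ d ≤ t ^ d := by gcongr; linarith
    calc (s ^ (d + 1) - r ^ (d + 1)) * (t - s)
        = s * ((s ^ d - r ^ d) * (t - s)) + r ^ d * ((s - r) * (t - s)) := by ring
      _ ≤ s * ((s - r) * t ^ d) + t ^ d * ((s - r) * (t - s)) := by
        have : 0 ≤ (s - r) * (t - s) := mul_nonneg (sub_nonneg.2 hrs) gap.le
        gcongr
      _ = (s - r) * t ^ (d + 1) := by ring

/-- The kernel `(ρ ^ |α - β| K α β)`; for `K = toeplitzKernel X 1` it is the matrix of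
`𝒫(R, ρX)`. -/
def dilate {n : ℕ} (ρ : ℝ) (K : Matrix (Fin n → ℕ) (Fin n → ℕ) (E →L[𝕜] E)) :
    Matrix (Fin n → ℕ) (Fin n → ℕ) (E →L[𝕜] E) :=
  Matrix.of fun α β => ((ρ ^ latticeDist α β : ℝ) : 𝕜) • K α β

section dilate

variable {n : ℕ} (K L : Matrix (Fin n → ℕ) (Fin n → ℕ) (E →L[𝕜] E))

lemma dilate_one : dilate 1 K = K := by
  ext; simp [dilate]

lemma dilate_sub (ρ : ℝ) : dilate ρ (K - L) = dilate ρ K - dilate ρ L := by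
  ext; simp [dilate, smul_sub]

lemma dilate_smul (ρ : ℝ) (c : 𝕜) : dilate ρ (c • K) = c • dilate ρ K := by
  ext; simp [dilate, smul_comm c]

lemma isHermitian_dilate [CompleteSpace E] {K : Matrix (Fin n → ℕ) (Fin n → ℕ) (E →L[𝕜] E)}
    (hK : K.IsHermitian) (ρ : ℝ) : (dilate ρ K).IsHermitian := by
  ext α β : 1
  simp [dilate, latticeDist_comm β α, hK.apply α β, RCLike.star_def]

lemma forall_kernelForm_dilate_nonneg_iff :
    (∀ ρ ∈ Set.Ico (0 : ℝ) 1, ∀ s h, 0 ≤ kernelForm (dilate ρ K) s h h) ↔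
      ∀ s h, 0 ≤ kernelForm K s h h := by
  constructor
  · intro nonneg s h
    have cont : Continuous fun ρ : ℝ => kernelForm (dilate ρ K) s h h := by
      simp only [kernelForm_apply, dilate, Matrix.of_apply, smul_apply, inner_smul_left,
        RCLike.conj_ofReal, RCLike.re_ofReal_mul]
      fun_prop
    have tendsto := (cont.tendsto 1).mono_left (nhdsWithin_le_nhds (s := Set.Iio 1))
    rw [dilate_one] at tendsto
    refine ge_of_tendsto tendsto ?_
    filter_upwards [Ico_mem_nhdsLT zero_lt_one] with ρ hρ using nonneg ρ hρ s h
  · intro nonneg ρ hρ s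
    exact kernelForm_hadamard_nonneg (posSemidef_pow_latticeDist hρ) (nonneg s)

end dilate

variable [CompleteSpace E] {n : ℕ}

lemma abs_kernelForm_dilate_sub_le {A T : Fin n → E →L[𝕜] E} {s t : ℝ} (hs : ‖A - T‖ ≤ s - ‖T‖)
    (hst : s < t) (ht : t < 1) {ρ : ℝ} (hρ : ρ ∈ Set.Icc 0 1) (S : Finset (Fin n → ℕ))
    (h : (Fin n → ℕ) → E) :
    |kernelForm (dilate ρ (toeplitzKernel A 1 - toeplitzKernel T 1)) S h h| ≤
      (s - ‖T‖) / (t - s) * (2 / (1 - t)) ^ n * ∑ α ∈ S, ‖h α‖ ^ 2 := by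
  have norm_le : ‖T‖ ≤ s := sub_nonneg.1 ((norm_nonneg _).trans hs)
  have hs₀ : 0 ≤ s := (norm_nonneg T).trans norm_le
  have : 0 ≤ (s - ‖T‖) / (t - s) :=
    div_nonneg (sub_nonneg.2 norm_le) (sub_nonneg.2 hst.le)
  have bound (i : Fin n) : PerturbationBound (A i) (T i) s ‖T‖ :=
    ⟨norm_le_pi_norm T i, (norm_le_pi_norm (A - T) i).trans hs⟩
  refine abs_kernelForm_le_of_sum_row_le (w := fun α β => (s - ‖T‖) / (t - s) * t ^ latticeDist α β)
    (fun α β => ?_) (fun α β => by rw [latticeDist_comm]) (fun α => ?_) h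
  · calc ‖dilate ρ (toeplitzKernel A 1 - toeplitzKernel T 1) α β‖
        ≤ 1 * ‖toeplitzKernel A 1 α β - toeplitzKernel T 1 α β‖ := by
          rw [dilate, Matrix.of_apply, norm_smul, RCLike.norm_ofReal,
            abs_of_nonneg (pow_nonneg hρ.1 _)]
          gcongr
          · exact pow_le_one₀ hρ.1 hρ.2
          · exact le_rfl
      _ ≤ s ^ latticeDist α β - ‖T‖ ^ latticeDist α β := by
          rw [one_mul]
          exact (PerturbationBound.toeplitzKernel bound α β).norm_sub_le
      _ ≤ (s - ‖T‖) / (t - s) * t ^ latticeDist α β :=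
          pow_sub_pow_le (norm_nonneg T) norm_le hst _
  · rw [← mul_sum]
    gcongr
    simpa [latticeDist_comm α] using sum_pow_latticeDist_le (hs₀.trans hst.le) ht S α

lemma eventually_abs_kernelForm_dilate_sub_le {T : Fin n → E →L[𝕜] E} (hT : ∀ i, ‖T i‖ < 1)
    {η : ℝ} (hη : 0 < η) :
    ∀ᶠ A in 𝓝 T, ∀ ρ ∈ Set.Icc (0 : ℝ) 1, ∀ s h,
      |kernelForm (dilate ρ (toeplitzKernel A 1 - toeplitzKernel T 1)) s h h| ≤
        η * ∑ α ∈ s, ‖h α‖ ^ 2 := by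
  obtain ⟨t, norm_lt, ht⟩ := exists_between ((pi_norm_lt_iff one_pos).2 hT)
  have coeff_tendsto : Tendsto (fun s => (s - ‖T‖) / (t - s) * (2 / (1 - t)) ^ n) (𝓝[>] ‖T‖)
      (𝓝 0) := by
    have cont : ContinuousAt (fun s => (s - ‖T‖) / (t - s) * (2 / (1 - t)) ^ n) ‖T‖ := by
      have : t - ‖T‖ ≠ 0 := (sub_pos.2 norm_lt).ne'
      fun_prop (disch := assumption)
    simpa using cont.tendsto.mono_left nhdsWithin_le_nhds
  obtain ⟨s, coeff_lt, hs, hst⟩ :=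
    ((coeff_tendsto.eventually_lt_const hη).and (Ioo_mem_nhdsGT norm_lt)).exists
  filter_upwards [Metric.closedBall_mem_nhds T (sub_pos.2 hs)] with A hA ρ hρ S h
  refine (abs_kernelForm_dilate_sub_le (mem_closedBall_iff_norm.1 hA) hst ht hρ S h).trans ?_
  gcongr

lemma exists_kernelForm_le {X : Fin n → E →L[𝕜] E} (hX : ∀ i, ‖X i‖ < 1) :
    ∃ C : ℝ, ∀ s h, kernelForm (toeplitzKernel X 1) s h h ≤ C * ∑ α ∈ s, ‖h α‖ ^ 2 := by
  have bound (i : Fin n) : PerturbationBound (X i) (X i) ‖X‖ ‖X‖ :=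
    ⟨norm_le_pi_norm X i, by simp⟩
  refine ⟨(2 / (1 - ‖X‖)) ^ n, fun s h => (le_abs_self _).trans <| abs_kernelForm_le_of_sum_row_le
    (w := fun α β => ‖X‖ ^ latticeDist α β)
    (fun α β => (PerturbationBound.toeplitzKernel bound α β).norm_le)
    (fun α β => by rw [latticeDist_comm]) (fun α => ?_) h⟩
  simpa [latticeDist_comm α] using
    sum_pow_latticeDist_le (norm_nonneg X) ((pi_norm_lt_iff one_pos).2 hX) s α

end Perturbation

section PoissonMetric

open Filter Finset Topology

/-- `P` is the family `r ↦ 𝒫(R, rX)` of Poisson kernels of a point `X` of the regular polydisk. -/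
structure IsPoissonFamily (X : Fin k → H →L[ℂ] H) (P : ℝ → L2 k H →L[ℂ] L2 k H) : Prop where
  mem : memPolydisk X
  isPoissonKernel : ∀ r ∈ Set.Ico (0 : ℝ) 1, IsPoissonKernel X r (P r)

lemma isPoissonKernel_iff {X : Fin k → H →L[ℂ] H} {r : ℝ} {P : L2 k H →L[ℂ] L2 k H} :
    IsPoissonKernel X r P ↔ HasOperatorMatrix P (dilate r (toeplitzKernel X 1)) := by
  refine forall₃_congr fun α β h => ⟨fun eq => ext_inner_right ℂ fun ℓ => ?_, fun eq ℓ => ?_⟩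
  · rw [← lp.inner_single_right, eq]
    simp [dilate, toeplitzKernel, tuplePow, inner_smul_left, latticeDist, Nat.dist,
      star_eq_adjoint]
  · rw [lp.inner_single_right, eq]
    simp [dilate, toeplitzKernel, tuplePow, inner_smul_left, latticeDist, Nat.dist,
      star_eq_adjoint]

lemma forall_isPositive_iff {K : Matrix (Fin k → ℕ) (Fin k → ℕ) (H →L[ℂ] H)}
    (hK : K.IsHermitian) {P : ℝ → L2 k H →L[ℂ] L2 k H}
    (hP : ∀ r ∈ Set.Ico (0 : ℝ) 1, HasOperatorMatrix (P r) (dilate r K)) :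
    (∀ r ∈ Set.Ico (0 : ℝ) 1, (P r).IsPositive) ↔ ∀ s h, 0 ≤ kernelForm K s h h := by
  rw [← forall_kernelForm_dilate_nonneg_iff]
  exact forall₂_congr fun r hr => (hP r hr).isPositive_iff (isHermitian_dilate hK r)

namespace IsPoissonFamily

variable {A B : Fin k → H →L[ℂ] H} {PA PB : ℝ → L2 k H →L[ℂ] L2 k H}

lemma isHermitian (hA : IsPoissonFamily A PA) : (toeplitzKernel A 1).IsHermitian :=
  toeplitzKernel_isHermitian hA.mem.1 (.one _)

lemma hasOperatorMatrix (hA : IsPoissonFamily A PA) {r : ℝ} (hr : r ∈ Set.Ico (0 : ℝ) 1) :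
    HasOperatorMatrix (PA r) (dilate r (toeplitzKernel A 1)) :=
  isPoissonKernel_iff.1 (hA.isPoissonKernel r hr)

lemma forall_opLE_smul_iff (hA : IsPoissonFamily A PA) (hB : IsPoissonFamily B PB) (a b : ℝ) :
    (∀ r ∈ Set.Ico (0 : ℝ) 1, opLE ((a : ℂ) • PA r) ((b : ℂ) • PB r)) ↔
      ∀ s h, a * kernelForm (toeplitzKernel A 1) s h h ≤
        b * kernelForm (toeplitzKernel B 1) s h h := by
  have isHermitian_smul {K : Matrix (Fin k → ℕ) (Fin k → ℕ) (H →L[ℂ] H)} (c : ℝ)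
      (hK : K.IsHermitian) : ((c : ℂ) • K).IsHermitian :=
    hK.smul (Complex.conj_ofReal c)
  have difference := forall_isPositive_iff (P := fun r => (b : ℂ) • PB r - (a : ℂ) • PA r)
    ((isHermitian_smul b hB.isHermitian).sub (isHermitian_smul a hA.isHermitian)) fun r hr => by
      rw [dilate_sub, dilate_smul, dilate_smul]
      exact ((hB.hasOperatorMatrix hr).smul _).sub ((hA.hasOperatorMatrix hr).smul _)
  have form_smul (c : ℝ) (K : Matrix (Fin k → ℕ) (Fin k → ℕ) (H →L[ℂ] H)) (s h) :
      kernelForm ((c : ℂ) • K) s h h = c * kernelForm K s h h :=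
    kernelForm_ofReal_smul (𝕜 := ℂ) c K s h h
  simp only [kernelForm_sub, form_smul, sub_nonneg] at difference
  exact difference

lemma poissonSandwich_iff (hA : IsPoissonFamily A PA) (hB : IsPoissonFamily B PB) {c : ℝ} :
    PoissonSandwich PA PB c ↔ ∀ s h,
      (c ^ 2)⁻¹ * kernelForm (toeplitzKernel B 1) s h h ≤ kernelForm (toeplitzKernel A 1) s h h ∧
      kernelForm (toeplitzKernel A 1) s h h ≤ c ^ 2 * kernelForm (toeplitzKernel B 1) s h h := by
  have lower := forall_opLE_smul_iff hB hA (c ^ 2)⁻¹ 1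
  have upper := forall_opLE_smul_iff hA hB 1 (c ^ 2)
  simp only [Complex.ofReal_one, one_smul, one_mul, Complex.ofReal_inv, Complex.ofReal_pow]
    at lower upper
  simp only [PoissonSandwich, forall_and, lower, upper]

lemma poissonEquiv (hA : IsPoissonFamily A PA) (hB : IsPoissonFamily B PB) :
    PoissonEquiv PA PB := by
  obtain ⟨-, εA, εA_pos, lower_A⟩ := memPolydisk_iff.1 hA.mem
  obtain ⟨-, εB, εB_pos, lower_B⟩ := memPolydisk_iff.1 hB.mem
  obtain ⟨CA, upper_A⟩ := exists_kernelForm_le hA.mem.2.1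
  obtain ⟨CB, upper_B⟩ := exists_kernelForm_le hB.mem.2.1
  obtain ⟨c, hc, hcA, hcB⟩ : ∃ c : ℝ, 1 ≤ c ∧ CA / εB ≤ c ∧ CB / εA ≤ c :=
    ⟨max 1 (max (CA / εB) (CB / εA)), by simp⟩
  have c_le_sq : c ≤ c ^ 2 := le_self_pow₀ hc two_ne_zero
  refine ⟨c, hc, (poissonSandwich_iff hA hB).2 fun s h => ⟨?_, ?_⟩⟩
  · rw [inv_mul_le_iff₀ (by positivity)]
    calc _ ≤ CB * ∑ α ∈ s, ‖h α‖ ^ 2 := upper_B s h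
      _ ≤ c ^ 2 * εA * ∑ α ∈ s, ‖h α‖ ^ 2 := by
        gcongr
        exact (div_le_iff₀ εA_pos).1 (hcB.trans c_le_sq)
      _ ≤ _ := by
        rw [mul_assoc]
        gcongr
        exact lower_A s h
  · calc _ ≤ CA * ∑ α ∈ s, ‖h α‖ ^ 2 := upper_A s h
      _ ≤ c ^ 2 * εB * ∑ α ∈ s, ‖h α‖ ^ 2 := by
        gcongr
        exact (div_le_iff₀ εB_pos).1 (hcA.trans c_le_sq)
      _ ≤ _ := by
        rw [mul_assoc]
        gcongr
        exact lower_B s h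

end IsPoissonFamily

lemma deltaP_lt_iff {PA PB : ℝ → L2 k H →L[ℂ] L2 k H} (hPP : PoissonEquiv PA PB) {ε : ℝ} :
    deltaP PA PB < ε ↔ ∃ c, 1 ≤ c ∧ PoissonSandwich PA PB c ∧ c < Real.exp ε := by
  have one_le : 1 ≤ sInf {c : ℝ | 1 ≤ c ∧ PoissonSandwich PA PB c} :=
    le_csInf hPP fun _ hc => hc.1
  rw [deltaP, Real.log_lt_iff_lt_exp (one_pos.trans_le one_le)]
  exact (csInf_lt_iff ⟨1, fun _ hc => hc.1⟩ hPP).trans (exists_congr fun _ => and_assoc)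

namespace IsPoissonFamily

variable {A B T : Fin k → H →L[ℂ] H} {PA PB PT : ℝ → L2 k H →L[ℂ] L2 k H}

lemma deltaP_lt_iff (hA : IsPoissonFamily A PA) (hB : IsPoissonFamily B PB) {ε : ℝ} :
    deltaP PA PB < ε ↔ ∃ c, 1 ≤ c ∧ (∀ s h,
      (c ^ 2)⁻¹ * kernelForm (toeplitzKernel B 1) s h h ≤ kernelForm (toeplitzKernel A 1) s h h ∧
      kernelForm (toeplitzKernel A 1) s h h ≤ c ^ 2 * kernelForm (toeplitzKernel B 1) s h h) ∧
      c < Real.exp ε := by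
  simp only [_root_.deltaP_lt_iff (hA.poissonEquiv hB), hA.poissonSandwich_iff hB]

lemma norm_sub_lt (hA : IsPoissonFamily A PA) (hB : IsPoissonFamily B PB) {ε : ℝ} (hε : 0 < ε)
    (h : deltaP PA PB < Real.log (1 + ε / 2) / 2) (i : Fin k) : ‖A i - B i‖ < ε := by
  obtain ⟨c, hc, sandwich, c_lt⟩ := (hA.deltaP_lt_iff hB).1 h
  have c_sq_lt : c ^ 2 < 1 + ε / 2 := by
    calc c ^ 2 < Real.exp (Real.log (1 + ε / 2) / 2) ^ 2 := by gcongr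
      _ = 1 + ε / 2 := by
        rw [← Real.exp_nat_mul, Nat.cast_two, mul_div_cancel₀ _ two_ne_zero,
          Real.exp_log (by positivity)]
  have := norm_sub_le_of_kernelForm_le (one_le_pow₀ hc) (fun s h => (sandwich s h).2)
    (hB.mem.2.1 i).le
  linarith

lemma isCoerciveTuple (hA : IsPoissonFamily A PA) (hB : IsPoissonFamily B PB) {ε δ : ℝ}
    (hε : 0 ≤ ε) (hBε : IsCoerciveTuple B ε) (h : deltaP PA PB < δ) :
    IsCoerciveTuple A ((Real.exp δ ^ 2)⁻¹ * ε) := by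
  obtain ⟨c, hc, sandwich, c_lt⟩ := (hA.deltaP_lt_iff hB).1 h
  intro s h
  calc _ ≤ (c ^ 2)⁻¹ * ε * ∑ α ∈ s, ‖h α‖ ^ 2 := by gcongr
    _ ≤ (c ^ 2)⁻¹ * kernelForm (toeplitzKernel B 1) s h h := by
      rw [mul_assoc]
      gcongr
      exact hBε s h
    _ ≤ _ := (sandwich s h).1

lemma eventually_deltaP_lt (hT : IsPoissonFamily T PT) {ε : ℝ} (hε : 0 < ε) :
    ∀ᶠ A in 𝓝 T, ∀ PA, IsPoissonFamily A PA → deltaP PA PT < ε := by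
  obtain ⟨-, e, he, coercive⟩ := memPolydisk_iff.1 hT.mem
  have coeff_pos : 0 < 1 - Real.exp (-ε) := by simpa using hε
  filter_upwards [eventually_abs_kernelForm_dilate_sub_le hT.mem.2.1 (mul_pos coeff_pos he)]
    with A hA PA hPA
  refine (hPA.deltaP_lt_iff hT).2 ⟨Real.exp (ε / 2), Real.one_le_exp (by positivity),
    fun s h => ?_, Real.exp_lt_exp.2 (half_lt_self hε)⟩
  have form_sub_le : |kernelForm (toeplitzKernel A 1) s h h - kernelForm (toeplitzKernel T 1) s h h|
      ≤ (1 - Real.exp (-ε)) * kernelForm (toeplitzKernel T 1) s h h := by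
    have := hA 1 (Set.right_mem_Icc.2 zero_le_one) s h
    rw [dilate_one, kernelForm_sub, mul_assoc] at this
    exact this.trans (by gcongr; exact coercive s h)
  have form_nonneg : 0 ≤ kernelForm (toeplitzKernel T 1) s h h :=
    le_trans (by positivity) (coercive s h)
  have two_le : 2 ≤ Real.exp ε + Real.exp (-ε) := by
    rw [← mul_div_cancel₀ (Real.exp ε + Real.exp (-ε)) two_ne_zero, ← Real.cosh_eq]
    linarith [Real.one_le_cosh ε]
  have exp_sq : Real.exp (ε / 2) ^ 2 = Real.exp ε := by
    rw [← Real.exp_nat_mul, Nat.cast_two, mul_div_cancel₀ _ two_ne_zero]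
  rw [exp_sq, ← Real.exp_neg]
  obtain ⟨lower, upper⟩ := abs_le.1 form_sub_le
  exact ⟨by linarith, by nlinarith⟩

end IsPoissonFamily

end PoissonMetric

section Completeness

open Filter Finset Topology

lemma continuous_tuplePow {M : Type*} [Monoid M] [TopologicalSpace M] [ContinuousMul M] {n : ℕ}
    (p : Fin n → ℕ) : Continuous fun X : Fin n → M => tuplePow X p := by
  simp only [tuplePow, List.ofFn_eq_map]
  exact continuous_list_prod _ fun i _ => by fun_prop

lemma continuous_toeplitzKernel {R : Type*} [Ring R] [StarRing R] [TopologicalSpace R]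
    [ContinuousMul R] [ContinuousStar R] {n : ℕ} (Y : R) :
    Continuous fun X : Fin n → R => toeplitzKernel X Y :=
  continuous_matrix fun _ _ => ((continuous_tuplePow _).mul_const _).mul
    ((continuous_tuplePow _).comp continuous_star)

lemma continuous_kernelForm {𝕜 E ι : Type*} [RCLike 𝕜] [NormedAddCommGroup E]
    [InnerProductSpace 𝕜 E] (s : Finset ι) (g h : ι → E) :
    Continuous fun K : Matrix ι ι (E →L[𝕜] E) => kernelForm K s g h := by
  simp only [kernelForm_apply]
  fun_prop

lemma continuous_dilate {𝕜 E : Type*} [RCLike 𝕜] [NormedAddCommGroup E]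
    [InnerProductSpace 𝕜 E] {n : ℕ} (ρ : ℝ) :
    Continuous (dilate ρ : Matrix (Fin n → ℕ) (Fin n → ℕ) (E →L[𝕜] E) → _) :=
  continuous_matrix fun _ _ => by simp only [dilate, Matrix.of_apply]; fun_prop

lemma tendsto_pi_iff_norm_sub_lt {ι κ E : Type*} [Finite ι] [SeminormedAddCommGroup E]
    {l : Filter κ} {x : κ → ι → E} {y : ι → E} :
    Tendsto x l (𝓝 y) ↔ ∀ ε : ℝ, 0 < ε → ∀ᶠ m in l, ∀ i, ‖x m i - y i‖ < ε := by
  cases nonempty_fintype ι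
  refine Metric.tendsto_nhds.trans (forall₂_congr fun ε hε => eventually_congr (.of_forall ?_))
  intro m
  rw [dist_pi_lt_iff hε]
  simp only [dist_eq_norm]

variable {κ : Type*} {l : Filter κ} {A : κ → Fin k → H →L[ℂ] H} {T : Fin k → H →L[ℂ] H}

lemma memPolydisk_of_tendsto [l.NeBot] (comm : ∀ m i j, Commute (A m i) (A m j)) {ε : ℝ}
    (hε : 0 < ε) (coercive : ∀ᶠ m in l, IsCoerciveTuple (A m) ε) (hA : Tendsto A l (𝓝 T)) :
    memPolydisk T := by
  refine memPolydisk_iff.2 ⟨fun i j => ?_, ε, hε, fun s h => ?_⟩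
  · have hAi := tendsto_pi_nhds.1 hA
    exact tendsto_nhds_unique ((hAi i).mul (hAi j))
      (((hAi j).mul (hAi i)).congr fun m => (comm m j i).eq)
  · refine ge_of_tendsto ((((continuous_kernelForm s h h).comp
      (continuous_toeplitzKernel (R := H →L[ℂ] H) 1)).tendsto T).comp hA) ?_
    filter_upwards [coercive] with m hm using hm s h

lemma cauchySeq_poissonKernel {A : ℕ → Fin k → H →L[ℂ] H} {P : ℕ → ℝ → L2 k H →L[ℂ] L2 k H}
    (hP : ∀ m, IsPoissonFamily (A m) (P m)) (hT : ∀ i, ‖T i‖ < 1) (hA : Tendsto A atTop (𝓝 T))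
    {r : ℝ} (hr : r ∈ Set.Ico (0 : ℝ) 1) : CauchySeq fun m => P m r := by
  refine Metric.cauchySeq_iff'.2 fun η hη => ?_
  obtain ⟨N, close⟩ := eventually_atTop.1
    (hA.eventually (eventually_abs_kernelForm_dilate_sub_le hT (by positivity : 0 < η / 4)))
  refine ⟨N, fun m hm => ?_⟩
  rw [dist_eq_norm]
  refine lt_of_le_of_lt (((hP m).hasOperatorMatrix hr).sub ((hP N).hasOperatorMatrix hr) |>.norm_le
    ((isHermitian_dilate (hP m).isHermitian r).sub (isHermitian_dilate (hP N).isHermitian r))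
    (η := η / 2) (by positivity) fun s h => ?_) (half_lt_self hη)
  have near (l : ℕ) (hl : N ≤ l) := close l hl r ⟨hr.1, hr.2.le⟩ s h
  simp only [dilate_sub, kernelForm_sub] at near ⊢
  calc _ ≤ _ := abs_sub_le _ (kernelForm (dilate r (toeplitzKernel T 1)) s h h) _
    _ ≤ η / 4 * ∑ α ∈ s, ‖h α‖ ^ 2 + η / 4 * ∑ α ∈ s, ‖h α‖ ^ 2 :=
      add_le_add (near m hm) ((abs_sub_comm _ _).trans_le (near N le_rfl))
    _ = η / 2 * ∑ α ∈ s, ‖h α‖ ^ 2 := by ring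

lemma exists_isPoissonFamily_of_tendsto {A : ℕ → Fin k → H →L[ℂ] H}
    {P : ℕ → ℝ → L2 k H →L[ℂ] L2 k H} (hP : ∀ m, IsPoissonFamily (A m) (P m))
    (hT : memPolydisk T) (hA : Tendsto A atTop (𝓝 T)) : ∃ PT, IsPoissonFamily T PT := by
  have exists_kernel (r : ℝ) (hr : r ∈ Set.Ico (0 : ℝ) 1) : ∃ Q, IsPoissonKernel T r Q := by
    obtain ⟨Q, hQ⟩ := cauchySeq_tendsto_of_complete (cauchySeq_poissonKernel hP hT.2.1 hA hr)
    have matrix_tendsto := (((continuous_dilate r).comp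
      (continuous_toeplitzKernel (R := H →L[ℂ] H) 1)).tendsto T).comp hA
    exact ⟨Q, isPoissonKernel_iff.2
      (.of_tendsto (fun m => (hP m).hasOperatorMatrix hr) hQ matrix_tendsto)⟩
  choose! PT hPT using exists_kernel
  exact ⟨PT, hT, hPT⟩

lemma cauchySeq_of_deltaP {A : ℕ → Fin k → H →L[ℂ] H} {P : ℕ → ℝ → L2 k H →L[ℂ] L2 k H}
    (hP : ∀ m, IsPoissonFamily (A m) (P m))
    (cauchy : ∀ ε : ℝ, 0 < ε → ∃ N, ∀ m ≥ N, ∀ n ≥ N, deltaP (P m) (P n) < ε) : CauchySeq A := by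
  refine Metric.cauchySeq_iff.2 fun ε hε => ?_
  obtain ⟨N, hN⟩ := cauchy _ (half_pos (Real.log_pos (lt_add_of_pos_right 1 (half_pos hε))))
  refine ⟨N, fun m hm n hn => (dist_pi_lt_iff hε).2 fun i => ?_⟩
  rw [dist_eq_norm]
  exact (hP m).norm_sub_lt (hP n) hε (hN m hm n hn) i

lemma exists_tendsto_of_deltaP_cauchy {A : ℕ → Fin k → H →L[ℂ] H}
    {P : ℕ → ℝ → L2 k H →L[ℂ] L2 k H} (hP : ∀ m, IsPoissonFamily (A m) (P m))
    (cauchy : ∀ ε : ℝ, 0 < ε → ∃ N, ∀ m ≥ N, ∀ n ≥ N, deltaP (P m) (P n) < ε) :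
    ∃ T PT, IsPoissonFamily T PT ∧ Tendsto A atTop (𝓝 T) := by
  obtain ⟨T, hA⟩ := cauchySeq_tendsto_of_complete (cauchySeq_of_deltaP hP cauchy)
  obtain ⟨N, hN⟩ := cauchy 1 one_pos
  obtain ⟨-, e, he, coercive⟩ := memPolydisk_iff.1 (hP N).mem
  have mem : memPolydisk T := by
    refine memPolydisk_of_tendsto (fun m => (hP m).mem.1)
      (ε := (Real.exp 1 ^ 2)⁻¹ * e) (by positivity) ?_ hA
    filter_upwards [eventually_ge_atTop N] with m hm
    exact (hP m).isCoerciveTuple (hP N) he.le coercive (hN m hm N le_rfl)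
  obtain ⟨PT, hPT⟩ := exists_isPoissonFamily_of_tendsto hP mem hA
  exact ⟨T, PT, hPT, hA⟩

lemma eventually_deltaP_lt_iff_tendsto {P : κ → ℝ → L2 k H →L[ℂ] L2 k H}
    {PT : ℝ → L2 k H →L[ℂ] L2 k H} (hP : ∀ m, IsPoissonFamily (A m) (P m))
    (hT : IsPoissonFamily T PT) :
    (∀ ε : ℝ, 0 < ε → ∀ᶠ m in l, deltaP (P m) PT < ε) ↔ Tendsto A l (𝓝 T) := by
  constructor
  · intro h
    refine tendsto_pi_iff_norm_sub_lt.2 fun ε hε => ?_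
    filter_upwards [h _ (half_pos (Real.log_pos (lt_add_of_pos_right 1 (half_pos hε))))]
      with m hm using (hP m).norm_sub_lt hT hε hm
  · intro hA ε hε
    filter_upwards [hA.eventually (hT.eventually_deltaP_lt hε)] with m hm using hm _ (hP m)

end Completeness
/-- `δ_P` is complete on `D^k(H)`, and the `δ_P`-topology coincides with the
operator-norm topology on `D^k(H)`: (a) every `δ_P`-Cauchy sequence in `D^k(H)` converges in
`δ_P` to an element of `D^k(H)`; (b) for a sequence `(A^{(m)})` in `D^k(H)` and `A ∈ D^k(H)`,
`δ_P(A^{(m)}, A) → 0` iff `max_i ‖A_i^{(m)} - A_i‖ → 0`. -/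
theorem stmt_16 (hk : 1 ≤ k) :
    (∀ (A : ℕ → Fin k → (H →L[ℂ] H)) (P : ℕ → ℝ → (L2 k H →L[ℂ] L2 k H)),
      (∀ m, memPolydisk (A m)) →
      (∀ m, ∀ r ∈ Set.Ico (0 : ℝ) 1, IsPoissonKernel (A m) r (P m r)) →
      (∀ ε : ℝ, 0 < ε → ∃ N, ∀ m ≥ N, ∀ n ≥ N, deltaP (P m) (P n) < ε) →
      ∃ (T : Fin k → (H →L[ℂ] H)) (PT : ℝ → (L2 k H →L[ℂ] L2 k H)),
        memPolydisk T ∧ (∀ r ∈ Set.Ico (0 : ℝ) 1, IsPoissonKernel T r (PT r)) ∧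
        ∀ ε : ℝ, 0 < ε → ∃ N, ∀ m ≥ N, deltaP (P m) PT < ε) ∧
    (∀ (A : ℕ → Fin k → (H →L[ℂ] H)) (T : Fin k → (H →L[ℂ] H))
        (P : ℕ → ℝ → (L2 k H →L[ℂ] L2 k H)) (PT : ℝ → (L2 k H →L[ℂ] L2 k H)),
      (∀ m, memPolydisk (A m)) → memPolydisk T →
      (∀ m, ∀ r ∈ Set.Ico (0 : ℝ) 1, IsPoissonKernel (A m) r (P m r)) →
      (∀ r ∈ Set.Ico (0 : ℝ) 1, IsPoissonKernel T r (PT r)) →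
      ((∀ ε : ℝ, 0 < ε → ∃ N, ∀ m ≥ N, deltaP (P m) PT < ε) ↔
        (∀ ε : ℝ, 0 < ε → ∃ N, ∀ m ≥ N, ∀ i, ‖A m i - T i‖ < ε))) := by
  constructor
  · intro A P hA hP cauchy
    have family (m : ℕ) : IsPoissonFamily (A m) (P m) := ⟨hA m, hP m⟩
    obtain ⟨T, PT, hT, tendsto⟩ := exists_tendsto_of_deltaP_cauchy family cauchy
    exact ⟨T, PT, hT.mem, hT.isPoissonKernel, fun ε hε => Filter.eventually_atTop.1 <|
      (eventually_deltaP_lt_iff_tendsto family hT).2 tendsto ε hε⟩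
  · intro A T P PT hA hT hP hPT
    have family (m : ℕ) : IsPoissonFamily (A m) (P m) := ⟨hA m, hP m⟩
    simp only [← Filter.eventually_atTop]
    rw [eventually_deltaP_lt_iff_tendsto family ⟨hT, hPT⟩, tendsto_pi_iff_norm_sub_lt]

end
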